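/- arXiv:1611.02883 — 2 statements merged into one kernel-verified Lean document; each statement's English description precedes it below -/
import Mathlib

section
/- Let K be the finite field with 16 elements and L the finite field with 16^13 elements, viewed as a K-algebra (the degree-13 extension of K). Then there exist K-linear forms x_1^*, …, x_27^*, y_1^*, …, y_27^* : L → K and elements c_1, …, c_27 ∈ L such that for all x, y ∈ L, x·y = Σ_{i=1}^{27} x_i^*(x) y_i^*(y) c_i. In particular, the bilinear complexity of multiplication in F_{16^13} over F_16 is at most 27. -/
/-!
The curve `y² + y = x⁵` has genus `2`, so the space `𝓛(14P∞)` of functions regular away from the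
point `P∞` at infinity with a pole of order at most `14` there has dimension `13`. We interpolate
products `fg ∈ 𝓛(28P∞)` of two such functions through their values at `27` rational points.

The place of degree `13` is the point `(a, b)` with `a¹³ = a⁷ + a³ + a + 1` and `b = g(a)` for
`g = x⁸ + x⁵ + x⁴ + x³`; it lies on the curve because `g² + g + x⁵ = x³(x¹³ + x⁷ + x³ + x + 1)`
modulo `2`. Since `g` is monic of degree `8`, dividing polynomials of degree less than `13` by `g`
shows that `A(x) + B(x)y ↦ A(a) + B(a)b` maps `𝓛(14P∞) = {A + By | deg A ≤ 7, deg B ≤ 4}` onto the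
extension of degree `13`.

For the points, take both points above `12` elements of the field with `16` elements and one point
above `3` others. A function `A + By` in `𝓛(28P∞)` vanishing at the pairs has `B = 0` because
`deg B < 12`, and then `A = 0` because `deg A < 15`.
-/

open Polynomial

/-- A bilinear algorithm for the multiplication of the `K`-algebra `L` whose bilinear
multiplications are indexed by `ι`; the bilinear complexity of `L` over `K` is the least
cardinality of such an `ι`. -/
def HasBilinearMulAlgorithm (K L ι : Type*) [CommSemiring K] [Semiring L] [Algebra K L]
    [Fintype ι] : Prop :=
  ∃ (xs ys : ι → (L →ₗ[K] K)) (c : ι → L), ∀ x y : L, x * y = ∑ i, (xs i x * ys i y) • c i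

theorem HasBilinearMulAlgorithm.congr {K L ι κ : Type*} [CommSemiring K] [Semiring L]
    [Algebra K L] [Fintype ι] [Fintype κ] (h : HasBilinearMulAlgorithm K L ι) (e : κ ≃ ι) :
    HasBilinearMulAlgorithm K L κ := by
  obtain ⟨xs, ys, c, hxy⟩ := h
  refine ⟨xs ∘ e, ys ∘ e, c ∘ e, fun x y => ?_⟩
  rw [hxy]
  exact (e.sum_comp fun i => (xs i x * ys i y) • c i).symm

section Interpolation

variable {K R L ι : Type*} [Field K]

theorem exists_linearMap_section_of_map_eq_top [AddCommGroup R] [Module K R]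
    [AddCommGroup L] [Module K L] {φ : R →ₗ[K] L} {V : Submodule K R} (hV : V.map φ = ⊤) :
    ∃ s : L →ₗ[K] R, ∀ x, s x ∈ V ∧ φ (s x) = x := by
  obtain ⟨s, hs⟩ := (φ.domRestrict V).exists_rightInverse_of_surjective
    (by rw [LinearMap.range_domRestrict, hV])
  exact ⟨V.subtype ∘ₗ s, fun x => ⟨(s x).2, LinearMap.congr_fun hs x⟩⟩

theorem hasBilinearMulAlgorithm_of_interpolation [CommRing R] [Algebra K R] [CommRing L]
    [Algebra K L] [Fintype ι] (φ : R →ₐ[K] L) (ev : ι → R →ₐ[K] K) {V W : Submodule K R}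
    (hV : V.map φ.toLinearMap = ⊤) (hW : W.map φ.toLinearMap = ⊤)
    (hev : ∀ z ∈ V * W, (∀ i, ev i z = 0) → z = 0) : HasBilinearMulAlgorithm K L ι := by
  classical
  obtain ⟨s, hs⟩ := exists_linearMap_section_of_map_eq_top hV
  obtain ⟨t, ht⟩ := exists_linearMap_section_of_map_eq_top hW
  let values : R →ₗ[K] (ι → K) := LinearMap.pi fun i => (ev i).toLinearMap
  obtain ⟨l, hl⟩ := (values.domRestrict (V * W)).exists_leftInverse_of_injective <| by
    rw [LinearMap.ker_eq_bot']
    exact fun z hz => Subtype.ext (hev z z.2 (congrFun hz))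
  let reconstruct : (ι → K) →ₗ[K] L := φ.toLinearMap ∘ₗ (V * W).subtype ∘ₗ l
  have hreconstruct : ∀ z ∈ V * W, reconstruct (values z) = φ z := fun z hz =>
    congrArg (fun w : ↥(V * W) => φ w) (LinearMap.congr_fun hl ⟨z, hz⟩)
  refine ⟨fun i => (ev i).toLinearMap ∘ₗ s, fun i => (ev i).toLinearMap ∘ₗ t,
    fun i => reconstruct fun j => if i = j then 1 else 0, fun x y => ?_⟩
  calc x * y = φ (s x * t y) := by
        rw [map_mul]; exact congrArg₂ (· * ·) (hs x).2.symm (ht y).2.symm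
    _ = reconstruct (values (s x * t y)) :=
        (hreconstruct _ (Submodule.mul_mem_mul (hs x).1 (ht y).1)).symm
    _ = _ := by
        rw [LinearMap.pi_apply_eq_sum_univ reconstruct]
        simp only [values, LinearMap.pi_apply, AlgHom.toLinearMap_apply, map_mul,
          LinearMap.comp_apply]

end Interpolation

section Polynomial

variable {R : Type*}

theorem two_nsmul_degree_add_add_le [Semiring R] {p q : R[X]} {c k : WithBot ℕ}
    (hp : 2 • p.degree + c ≤ k) (hq : 2 • q.degree + c ≤ k) : 2 • (p + q).degree + c ≤ k := by
  rcases le_max_iff.1 (degree_add_le p q) with h | h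
  · exact (add_le_add_left (nsmul_le_nsmul_right h 2) c).trans hp
  · exact (add_le_add_left (nsmul_le_nsmul_right h 2) c).trans hq

theorem two_nsmul_degree_add_le [Semiring R] {p q : R[X]} {k : WithBot ℕ} (hp : 2 • p.degree ≤ k)
    (hq : 2 • q.degree ≤ k) : 2 • (p + q).degree ≤ k := by
  rw [← add_zero (2 • _)] at hp hq ⊢
  exact two_nsmul_degree_add_add_le hp hq

theorem eq_zero_of_eval_add_eval_mul_eq_zero [CommRing R] [IsDomain R] {A B : R[X]}
    {s t : Finset R} (hst : s ⊆ t) (hA : A.degree < t.card) (hB : B.degree < s.card) {q q' : R → R}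
    (hq : ∀ a ∈ t, A.eval a + B.eval a * q a = 0) (hq' : ∀ a ∈ s, A.eval a + B.eval a * q' a = 0)
    (hqq' : ∀ a ∈ s, q a ≠ q' a) : A = 0 ∧ B = 0 := by
  have hB0 : B = 0 := eq_zero_of_degree_lt_of_eval_finset_eq_zero s hB fun a ha =>
    (mul_eq_zero.1 (by linear_combination hq a (hst ha) - hq' a ha :
      B.eval a * (q a - q' a) = 0)).resolve_right (sub_ne_zero.2 (hqq' a ha))
  have hA0 : A = 0 := eq_zero_of_degree_lt_of_eval_finset_eq_zero t hA fun a ha => by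
    simpa [hB0] using hq a ha
  exact ⟨hA0, hB0⟩

end Polynomial

/-- The coordinate ring `K[x, y] / (y² + y - f(x))` of an affine curve in Artin–Schreier form, as
the quotient of `K[x][y]`. -/
abbrev ArtinSchreierRing {K : Type*} [Field K] (f : K[X]) : Type _ :=
  AdjoinRoot (X ^ 2 + X - C f : K[X][X])

namespace ArtinSchreierRing

variable {K : Type*} [Field K] (f : K[X])

/-- The function `A(x) + B(x)y` on the curve `y² + y = f(x)`. -/
noncomputable def linear (A B : K[X]) : ArtinSchreierRing f :=
  AdjoinRoot.of _ A + AdjoinRoot.of _ B * AdjoinRoot.root _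

theorem linear_add_linear (A B A' B' : K[X]) :
    linear f A B + linear f A' B' = linear f (A + A') (B + B') := by
  simp only [linear, map_add]; ring

theorem smul_linear (r : K) (A B : K[X]) : r • linear f A B = linear f (r • A) (r • B) := by
  simp only [linear, smul_add, ← smul_mul_assoc, AdjoinRoot.smul_of]

theorem linear_mul_linear (A B A' B' : K[X]) :
    linear f A B * linear f A' B' =
      linear f (A * A' + B * B' * f) (A * B' + B * A' - B * B') := by
  have hroot : (AdjoinRoot.root _ : ArtinSchreierRing f) ^ 2 + AdjoinRoot.root _ =
      AdjoinRoot.of _ f := by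
    have h := AdjoinRoot.eval₂_root (X ^ 2 + X - C f : K[X][X])
    simpa only [eval₂_sub, eval₂_add, eval₂_pow, eval₂_X, eval₂_C, sub_eq_zero] using h
  simp only [linear, map_add, map_sub, map_mul]
  linear_combination AdjoinRoot.of _ B * AdjoinRoot.of _ B' * hroot

/-- The functions `A(x) + B(x)y` with `2 deg A ≤ n` and `2 deg B + deg f ≤ n`. In characteristic `2`
and for `deg f` odd, `x` and `y` have poles of order `2` and `deg f` at the unique point `P∞` at
infinity, and this is the Riemann–Roch space `𝓛(nP∞)`. -/
def poleOrderLE (n : ℕ) : Submodule K (ArtinSchreierRing f) where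
  carrier := {z | ∃ A B : K[X], 2 • A.degree ≤ n ∧ 2 • B.degree + f.degree ≤ n ∧ linear f A B = z}
  zero_mem' := ⟨0, 0, by simp, by simp, by simp [linear]⟩
  add_mem' := by
    rintro _ _ ⟨A, B, hA, hB, rfl⟩ ⟨A', B', hA', hB', rfl⟩
    exact ⟨A + A', B + B', two_nsmul_degree_add_le hA hA', two_nsmul_degree_add_add_le hB hB',
      (linear_add_linear f A B A' B').symm⟩
  smul_mem' := by
    rintro r _ ⟨A, B, hA, hB, rfl⟩
    exact ⟨r • A, r • B, (nsmul_le_nsmul_right (degree_smul_le r A) 2).trans hA,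
      (add_le_add_left (nsmul_le_nsmul_right (degree_smul_le r B) 2) _).trans hB,
      (smul_linear f r A B).symm⟩

theorem poleOrderLE_mul_poleOrderLE_le (m n : ℕ) :
    poleOrderLE f m * poleOrderLE f n ≤ poleOrderLE f (m + n) := by
  rw [Submodule.mul_le]
  rintro _ ⟨A, B, hA, hB, rfl⟩ _ ⟨A', B', hA', hB', rfl⟩
  have hAA' : 2 • (A * A').degree ≤ (m + n : WithBot ℕ) := by
    rw [degree_mul]; convert add_le_add hA hA' using 1; abel
  have hBB'f : 2 • (B * B' * f).degree ≤ (m + n : WithBot ℕ) := by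
    rw [degree_mul, degree_mul]; convert add_le_add hB hB' using 1; abel
  have hAB' : 2 • (A * B').degree + f.degree ≤ (m + n : WithBot ℕ) := by
    rw [degree_mul]; convert add_le_add hA hB' using 1; abel
  have hBA' : 2 • (B * A').degree + f.degree ≤ (m + n : WithBot ℕ) := by
    rw [degree_mul]; convert add_le_add hB hA' using 1; abel
  have hBB' : 2 • (-(B * B')).degree + f.degree ≤ (m + n : WithBot ℕ) := by
    rcases eq_or_ne f 0 with rfl | hf
    · simp
    calc 2 • (-(B * B')).degree + f.degree
      _ ≤ 2 • (-(B * B')).degree + f.degree + f.degree :=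
          le_add_of_nonneg_right (zero_le_degree_iff.2 hf)
      _ = (2 • B.degree + f.degree) + (2 • B'.degree + f.degree) := by
          rw [degree_neg, degree_mul]; abel
      _ ≤ (m + n : WithBot ℕ) := add_le_add hB hB'
  refine ⟨A * A' + B * B' * f, A * B' + B * A' - B * B', ?_, ?_,
    (linear_mul_linear f A B A' B').symm⟩
  · rw [Nat.cast_add]
    exact two_nsmul_degree_add_le hAA' hBB'f
  · rw [Nat.cast_add, sub_eq_add_neg]
    exact two_nsmul_degree_add_add_le (two_nsmul_degree_add_add_le hAB' hBA') hBB'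

section Eval

variable {f} {S : Type*} [CommRing S] [Algebra K S]

/-- Evaluation at the point `(a, b)` of the curve `y² + y = f(x)`. -/
noncomputable def evalAt (a b : S) (h : b ^ 2 + b = aeval a f) : ArtinSchreierRing f →ₐ[K] S :=
  AdjoinRoot.liftAlgHom _ (aeval a) b (by simp [h])

@[simp]
theorem evalAt_linear (a b : S) (h : b ^ 2 + b = aeval a f) (A B : K[X]) :
    evalAt a b h (linear f A B) = aeval a A + aeval a B * b := by
  simp [evalAt, linear]

theorem map_evalAt_poleOrderLE_eq_top {a : S} {g : K[X]} (hg : g.Monic) {n N : ℕ}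
    (h : aeval a g ^ 2 + aeval a g = aeval a f)
    (haeval : ∀ x : S, ∃ P : K[X], P.natDegree < N ∧ aeval a P = x)
    (hgn : 2 * g.natDegree ≤ n + 2) (hN : 2 * N + f.natDegree ≤ n + 2 + 2 * g.natDegree) :
    (poleOrderLE f n).map (evalAt a _ h).toLinearMap = ⊤ := by
  refine eq_top_iff.2 fun x _ => ?_
  obtain ⟨P, hP, rfl⟩ := haeval x
  refine ⟨linear f (P %ₘ g) (P /ₘ g), ⟨P %ₘ g, P /ₘ g, ?_, ?_, rfl⟩, ?_⟩
  · rcases eq_or_ne (P %ₘ g) 0 with h0 | h0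
    · simp [h0]
    have hlt : (P %ₘ g).natDegree < g.natDegree :=
      natDegree_lt_natDegree h0 (degree_modByMonic_lt P hg)
    rw [degree_eq_natDegree h0, two_nsmul]
    norm_cast
    omega
  · rcases eq_or_ne (P /ₘ g) 0 with h0 | h0
    · simp [h0]
    have hle : g.natDegree ≤ P.natDegree :=
      natDegree_le_natDegree (not_lt.1 fun hlt => h0 ((divByMonic_eq_zero_iff hg).2 hlt))
    calc 2 • (P /ₘ g).degree + f.degree
      _ ≤ 2 • ((P /ₘ g).natDegree : WithBot ℕ) + f.natDegree := by
        gcongr <;> exact degree_le_natDegree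
      _ ≤ n := by
        rw [natDegree_divByMonic P hg, two_nsmul]
        norm_cast
        omega
  · calc evalAt a _ h (linear f (P %ₘ g) (P /ₘ g))
      _ = aeval a (P %ₘ g + g * (P /ₘ g)) := by rw [evalAt_linear, map_add, map_mul, mul_comm]
      _ = aeval a P := by rw [modByMonic_add_div]

end Eval

theorem eq_zero_of_mem_poleOrderLE {n : ℕ} {s t : Finset K} (hst : s ⊆ t)
    (ht : n < 2 * t.card) (hs : (n : WithBot ℕ) < 2 • s.card + f.degree) {q q' : K → K}
    (hq : ∀ a ∈ t, q a ^ 2 + q a = aeval a f) (hq' : ∀ a ∈ s, q' a ^ 2 + q' a = aeval a f)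
    (hqq' : ∀ a ∈ s, q a ≠ q' a) {z : ArtinSchreierRing f} (hz : z ∈ poleOrderLE f n)
    (hzq : ∀ a (ha : a ∈ t), evalAt a (q a) (hq a ha) z = 0)
    (hzq' : ∀ a (ha : a ∈ s), evalAt a (q' a) (hq' a ha) z = 0) : z = 0 := by
  obtain ⟨A, B, hA, hB, rfl⟩ := hz
  have hAt : A.degree < t.card := by
    refine lt_of_nsmul_lt_nsmul_right 2 (hA.trans_lt ?_)
    rw [two_nsmul]
    norm_cast
    omega
  have hBs : B.degree < s.card :=
    lt_of_nsmul_lt_nsmul_right 2 (lt_of_add_lt_add_right (hB.trans_lt hs))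
  obtain ⟨rfl, rfl⟩ := eq_zero_of_eval_add_eval_mul_eq_zero hst hAt hBs
    (fun a ha => by simpa using hzq a ha) (fun a ha => by simpa using hzq' a ha) hqq'
  simp [linear]

theorem hasBilinearMulAlgorithm_of_map_poleOrderLE_eq_top {L : Type*} [CommRing L] [Algebra K L]
    [CharP K 2] {m n : ℕ} {a b : L} (h : b ^ 2 + b = aeval a f)
    (hm : (poleOrderLE f m).map (evalAt a b h).toLinearMap = ⊤)
    (hn : (poleOrderLE f n).map (evalAt a b h).toLinearMap = ⊤)
    {s t : Finset K} (hst : s ⊆ t) (ht : m + n < 2 * t.card)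
    (hs : ((m + n : ℕ) : WithBot ℕ) < 2 • s.card + f.degree)
    (hf : ∀ x ∈ t, ∃ y, y ^ 2 + y = f.eval x) :
    HasBilinearMulAlgorithm K L (s ⊕ t) := by
  choose! q hq using hf
  have hq' : ∀ x ∈ s, (q x + 1) ^ 2 + (q x + 1) = aeval x f := fun x hx => by
    rw [coe_aeval_eq_eval, ← hq x (hst hx)]
    linear_combination (q x + 1) * CharTwo.two_eq_zero (R := K)
  refine hasBilinearMulAlgorithm_of_interpolation (evalAt a b h)
    (Sum.elim (fun x => evalAt x.1 _ (hq' x x.2)) fun x => evalAt x.1 _ (hq x x.2)) hm hn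
    fun z hz hev => ?_
  exact eq_zero_of_mem_poleOrderLE f hst ht hs hq hq' (fun _ _ => by simp)
    (poleOrderLE_mul_poleOrderLE_le f m n hz) (fun x hx => hev (.inr ⟨x, hx⟩))
    (fun x hx => hev (.inl ⟨x, hx⟩))

end ArtinSchreierRing

section FiniteField

theorem exists_isRoot_of_forall_pow_card_eq {F : Type*} [Field F] [Fintype F] {f : F[X]}
    (hf : f.degree ≠ 0)
    (h : ∀ α : AlgebraicClosure F, aeval α f = 0 → α ^ Fintype.card F = α) : ∃ a, f.IsRoot a := by
  obtain ⟨α, hα⟩ := IsAlgClosed.exists_aeval_eq_zero (AlgebraicClosure F) f hf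
  have hs : (X ^ Fintype.card F - X : F[X]).Splits := by
    simpa using splits_X_pow_nat_card_sub_X (K := F)
  obtain ⟨a, rfl⟩ : α ∈ (algebraMap F (AlgebraicClosure F)).range :=
    hs.mem_range_of_isRoot (FiniteField.X_pow_card_sub_X_ne_zero F Fintype.one_lt_card)
      (by simp [h α hα])
  exact ⟨a, by simpa [aeval_algebraMap_apply] using hα⟩

theorem exists_sq_add_self_eq_pow_five {F : Type*} [Field F] [Fintype F] [CharP F 2]
    (hF : Fintype.card F = 16) (x : F) : ∃ y, y ^ 2 + y = x ^ 5 := by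
  have hx : (x ^ 5) ^ 4 = x ^ 5 := by
    have h16 : x ^ 16 = x := hF ▸ FiniteField.pow_card x
    linear_combination x ^ 4 * h16
  have hdeg : (X ^ 2 + X - C (x ^ 5) : F[X]).degree = 2 := by compute_degree!
  obtain ⟨y, hy⟩ := exists_isRoot_of_forall_pow_card_eq (by rw [hdeg]; decide) fun β hβ => by
    have : CharP (AlgebraicClosure _) 2 :=
      charP_of_injective_algebraMap (algebraMap F (AlgebraicClosure F)).injective 2
    set t := algebraMap F (AlgebraicClosure F) (x ^ 5)
    have ht : t ^ 4 = t := by rw [← map_pow, hx]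
    have hβ2 : β ^ 2 + β = t := by simpa [sub_eq_zero, t] using hβ
    have hβ4 : β ^ 4 = β + t + t ^ 2 := by grind
    calc β ^ Fintype.card F = (β ^ 4) ^ 4 := by rw [hF]; ring
      _ = β := by rw [hβ4]; grind
  exact ⟨y, by simpa [sub_eq_zero] using hy⟩

section Frobenius

variable {R : Type*} [CommRing R] [CharP R 2] {a : R}

theorem pow_two_pow_thirteen_eq_self (h : a ^ 13 = a ^ 7 + a ^ 3 + a + 1) : a ^ 2 ^ 13 = a := by
  have h4 : a ^ 16 = a ^ 10 + a ^ 6 + a ^ 4 + a ^ 3 := by linear_combination a ^ 3 * h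
  have h8 : (a ^ 16) ^ 16 = a ^ 12 + a ^ 11 + a ^ 9 + a ^ 7 + a ^ 3 := by
    rw [h4]; grind
  have h12 : (a ^ 12 + a ^ 11 + a ^ 9 + a ^ 7 + a ^ 3) ^ 16 = a ^ 7 + a ^ 4 + a ^ 2 + a := by grind
  calc a ^ 2 ^ 13 = (((a ^ 16) ^ 16) ^ 16) ^ 2 := by ring
    _ = (a ^ 7 + a ^ 4 + a ^ 2 + a) ^ 2 := by rw [h8, h12]
    _ = a := by grind

theorem sq_add_self_eq_pow_five_of_pow_thirteen_eq (h : a ^ 13 = a ^ 7 + a ^ 3 + a + 1) :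
    (a ^ 8 + a ^ 5 + a ^ 4 + a ^ 3) ^ 2 + (a ^ 8 + a ^ 5 + a ^ 4 + a ^ 3) = a ^ 5 := by
  linear_combination a ^ 3 * h + (a ^ 13 + a ^ 12 + a ^ 11 + a ^ 10 + a ^ 9 + 2 * a ^ 8 + a ^ 7 +
    a ^ 6 + a ^ 4 + a ^ 3) * CharTwo.two_eq_zero (R := R)

end Frobenius

theorem exists_pow_thirteen_eq {L : Type*} [Field L] [Fintype L] [CharP L 2] {k : ℕ}
    (hL : Fintype.card L = (2 ^ 13) ^ k) : ∃ a : L, a ^ 13 = a ^ 7 + a ^ 3 + a + 1 := by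
  have hdeg : (X ^ 13 - (X ^ 7 + X ^ 3 + X + 1) : L[X]).degree = 13 := by compute_degree!
  obtain ⟨a, ha⟩ := exists_isRoot_of_forall_pow_card_eq (by rw [hdeg]; decide) fun α hα => by
    have : CharP (AlgebraicClosure _) 2 :=
      charP_of_injective_algebraMap (algebraMap L (AlgebraicClosure L)).injective 2
    have hfrob : α ^ 2 ^ 13 = α :=
      pow_two_pow_thirteen_eq_self (by simpa [sub_eq_zero] using hα)
    rw [hL]
    exact (congrFun (pow_iterate (2 ^ 13) k) α).symm.trans (Function.iterate_fixed hfrob k)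
  exact ⟨a, by simpa [sub_eq_zero] using ha⟩

theorem adjoin_eq_top_of_pow_thirteen_eq {K L : Type*} [Field K] [Fintype K] [CharP K 2]
    (hK : Fintype.card K = 16) [Field L] [Algebra K L] (hL : Module.finrank K L = 13) {a : L}
    (ha : a ^ 13 = a ^ 7 + a ^ 3 + a + 1) : Algebra.adjoin K {a} = ⊤ := by
  have : CharP L 2 := charP_of_injective_algebraMap (algebraMap K L).injective 2
  have : IsSimpleOrder (Subalgebra K L) :=
    Subalgebra.isSimpleOrder_of_finrank_prime K L (hL ▸ by norm_num)
  refine (eq_bot_or_eq_top _).resolve_left fun hbot => ?_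
  obtain ⟨k, rfl⟩ := Algebra.mem_bot.1 (hbot ▸ Algebra.self_mem_adjoin_singleton K a)
  have h16 : algebraMap K L k ^ 16 = algebraMap K L k := by
    rw [← map_pow, ← hK, FiniteField.pow_card]
  have h2 : algebraMap K L k ^ 2 = algebraMap K L k :=
    calc algebraMap K L k ^ 2 = (((algebraMap K L k ^ 16) ^ 16) ^ 16) ^ 2 := by simp only [h16]
      _ = algebraMap K L k ^ 2 ^ 13 := by ring
      _ = algebraMap K L k := pow_two_pow_thirteen_eq_self ha
  have hpow (n : ℕ) : algebraMap K L k ^ (n + 1) = algebraMap K L k :=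
    IsIdempotentElem.pow_succ_eq n ((sq _).symm.trans h2)
  rw [hpow 12, hpow 6, hpow 2] at ha
  exact one_ne_zero (α := L) (by
    linear_combination -ha - algebraMap K L k * CharTwo.two_eq_zero (R := L))

theorem exists_natDegree_lt_finrank_aeval_eq {K L : Type*} [Field K] [Field L] [Algebra K L]
    [FiniteDimensional K L] {a : L} (ha : Algebra.adjoin K {a} = ⊤) (x : L) :
    ∃ P : K[X], P.natDegree < Module.finrank K L ∧ aeval a P = x := by
  let pb := PowerBasis.ofAdjoinEqTop (Algebra.IsIntegral.isIntegral a) ha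
  obtain ⟨P, hP, hx⟩ := pb.exists_eq_aeval x
  exact ⟨P, by rwa [pb.finrank], by simpa [pb] using hx.symm⟩

end FiniteField

theorem ArtinSchreierRing.exists_map_evalAt_poleOrderLE_eq_top {K L : Type*} [Field K] [Fintype K]
    [CharP K 2] (hK : Fintype.card K = 16) [Field L] [Algebra K L]
    (hL : Module.finrank K L = 13) :
    ∃ (a b : L) (h : b ^ 2 + b = aeval a (X ^ 5 : K[X])),
      (poleOrderLE (X ^ 5) 14).map (evalAt a b h).toLinearMap = ⊤ := by
  have : CharP L 2 := charP_of_injective_algebraMap (algebraMap K L).injective 2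
  have : FiniteDimensional K L := FiniteDimensional.of_finrank_pos (by simp [hL])
  have : Fintype L := @Fintype.ofFinite L (Module.finite_of_finite K)
  have hcard : Fintype.card L = (2 ^ 13) ^ 4 := by
    rw [Module.card_eq_pow_finrank (K := K), hK, hL]; norm_num
  obtain ⟨a, ha⟩ := exists_pow_thirteen_eq hcard
  let g : K[X] := X ^ 8 + X ^ 5 + X ^ 4 + X ^ 3
  have hg : g.Monic := by simp only [g]; monicity!
  have hgdeg : g.natDegree = 8 := by simp only [g]; compute_degree!
  have hcurve : aeval a g ^ 2 + aeval a g = aeval a (X ^ 5 : K[X]) := by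
    simpa [g] using sq_add_self_eq_pow_five_of_pow_thirteen_eq ha
  exact ⟨a, aeval a g, hcurve, map_evalAt_poleOrderLE_eq_top hg hcurve
    (exists_natDegree_lt_finrank_aeval_eq (adjoin_eq_top_of_pow_thirteen_eq hK hL ha))
    (by rw [hgdeg]) (by rw [hgdeg, hL, natDegree_X_pow]; norm_num)⟩

/-- The paper's effective asymmetric Chudnovsky-type construction: multiplication in
`F_{16^13}` (modelled by `L`, the degree-13 extension of the field `K` with 16 elements)
admits a bilinear multiplication algorithm with 27 bilinear multiplications; in particular
the bilinear complexity of `F_{16^13}` over `F_16` is at most 27. -/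
theorem bilinear_mul_F16_13
    (K : Type*) [Field K] [Fintype K] (hK : Fintype.card K = 16)
    (L : Type*) [Field L] [Algebra K L] (hL : Module.finrank K L = 13) :
    ∃ (xs ys : Fin 27 → (L →ₗ[K] K)) (c : Fin 27 → L),
      ∀ x y : L, x * y = ∑ i, (xs i x * ys i y) • c i := by
  have : CharP K 2 := charP_of_card_eq_prime_pow (f := 4) (by rw [hK]; norm_num)
  obtain ⟨a, b, hab, hsurj⟩ :=
    ArtinSchreierRing.exists_map_evalAt_poleOrderLE_eq_top (L := L) hK hL
  obtain ⟨t, -, ht⟩ : ∃ t ⊆ (Finset.univ : Finset K), t.card = 15 :=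
    Finset.exists_subset_card_eq (by simp [hK])
  obtain ⟨s, hst, hs⟩ : ∃ s ⊆ t, s.card = 12 := Finset.exists_subset_card_eq (by simp [ht])
  have hpoints : ∀ x ∈ t, ∃ y, y ^ 2 + y = (X ^ 5 : K[X]).eval x := fun x _ => by
    simpa using exists_sq_add_self_eq_pow_five hK x
  have halg : HasBilinearMulAlgorithm K L (s ⊕ t) :=
    ArtinSchreierRing.hasBilinearMulAlgorithm_of_map_poleOrderLE_eq_top _ hab hsurj hsurj hst
      (by simp [ht]) (by rw [hs, degree_X_pow]; norm_cast) hpoints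
  exact halg.congr (Fintype.equivFinOfCardEq (by simp [hs, ht])).symm
end

section
/- Let F₁₆ = F₂(a) where a is a root of the irreducible polynomial X⁴ + X + 1 over F₂. The polynomial Q(X) = X¹³ + a⁶X¹² + a⁵X¹¹ + a¹¹X¹⁰ + X⁹ + a¹²X⁸ + a⁷X⁷ + a⁷X⁵ + a²X⁴ + a¹¹X³ + a⁸X² + a⁶X + a¹⁴ ∈ F₁₆[X] is irreducible over F₁₆, and for every root b of Q in the degree-13 extension F_{16^13} of F₁₆, there exists y ∈ F₁₆(b) = F_{16^13} with y² + y = b⁵ (equivalently, the absolute trace Tr_{F_{16^13}/F₂}(b⁵) = 0). -/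
open Polynomial

/-!
By Ben-Or's test, a polynomial `P` of degree `n` over a field with `q` elements is irreducible as
soon as `x ^ q ^ d - x` is invertible modulo `P` for all `1 ≤ d ≤ n / 2`, where `x` is the class
of `X`: `x ^ q ^ d - x` vanishes modulo any irreducible factor of degree `d`. For the degree-13
polynomial of the theorem this leaves `d ≤ 6`. Both these units and the solution of
`y ^ 2 + y = x ^ 5` are exhibited by explicit polynomials in `x` over `F₁₆`, so everything reduces
to arithmetic in `F₁₆[X] ⧸ (Q)`, done on coefficient lists by kernel evaluation. `F₁₆` is modelled
by the tower `F₂ ⊂ F₄ ⊂ F₁₆` of quadratic algebras, which maps to any commutative ring of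
characteristic 2 containing a root of `X ^ 4 + X + 1`.
-/

/-- Polynomials over `A` as lists of coefficients, lowest degree first, of unconstrained length:
a computable counterpart of `A[X]`. -/
abbrev CoeffList (A : Type*) := List A

namespace CoeffList

section Operations

variable {A : Type*} [Zero A] [Add A] [Mul A]

/-- Sum of polynomials; the shorter list is implicitly padded with zeros. -/
def add : CoeffList A → CoeffList A → CoeffList A
  | [], q => q
  | p, [] => p
  | c :: p, d :: q => (c + d) :: add p q

/-- Product of a polynomial by a scalar. -/
def smul (c : A) (p : CoeffList A) : CoeffList A := p.map (c * ·)

/-- Product of polynomials. -/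
def mul (p q : CoeffList A) : CoeffList A := p.foldr (fun c s ↦ add (smul c q) (0 :: s)) []

/-- One rewriting step by `X ^ n = r`, where `n` is the length of `r`. -/
def reduce (r p : CoeffList A) : CoeffList A :=
  add (p.take r.length) (mul (p.drop r.length) r)

/-- Product of polynomials modulo `X ^ n - r`, where `n` is the length of `r`: Horner's scheme
with a reduction after each step, so that the lengths never exceed `n + 1`. -/
def mulMod (r p q : CoeffList A) : CoeffList A :=
  p.foldr (fun c s ↦ reduce r (add (smul c q) (0 :: s))) []

/-- Square of a polynomial modulo `X ^ n - r`, where `n` is the length of `r`. -/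
def sqMod (r p : CoeffList A) : CoeffList A := mulMod r p p

end Operations

section Eval

variable {A R : Type*} [Semiring A] [CommSemiring R] (φ : A →+* R) (x : R)

/-- Value of a polynomial at `x`, its coefficients being mapped to `R` by `φ`. -/
def eval (p : CoeffList A) : R := p.foldr (fun c s ↦ φ c + x * s) 0

@[simp]
theorem eval_nil : eval φ x [] = 0 := rfl

@[simp]
theorem eval_cons (c : A) (p : CoeffList A) : eval φ x (c :: p) = φ c + x * eval φ x p := rfl

theorem eval_add (p q : CoeffList A) : eval φ x (add p q) = eval φ x p + eval φ x q := by
  induction p, q using add.induct with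
  | case1 q => simp [add]
  | case2 p hp => simp [add]
  | case3 c p d q ih =>
    simp only [add, eval_cons, map_add, ih]
    ring

theorem eval_smul (c : A) (p : CoeffList A) : eval φ x (smul c p) = φ c * eval φ x p := by
  induction p with
  | nil => simp [smul]
  | cons d p ih =>
    simp only [smul, List.map_cons, eval_cons, map_mul] at ih ⊢
    rw [ih]
    ring

theorem eval_mul (p q : CoeffList A) : eval φ x (mul p q) = eval φ x p * eval φ x q := by
  induction p with
  | nil => simp [mul]
  | cons c p ih =>
    simp only [mul, List.foldr_cons, eval_add, eval_smul, eval_cons, map_zero] at ih ⊢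
    rw [ih]
    ring

theorem eval_take_add_eval_drop (n : ℕ) (p : CoeffList A) :
    eval φ x (p.take n) + x ^ n * eval φ x (p.drop n) = eval φ x p := by
  induction n generalizing p with
  | zero => simp
  | succ n ih =>
    cases p with
    | nil => simp
    | cons c p =>
      rw [List.take_succ_cons, List.drop_succ_cons, eval_cons, eval_cons, ← ih p]
      ring

variable {φ x} {r : CoeffList A} (hr : x ^ r.length = eval φ x r)
include hr

theorem eval_reduce (p : CoeffList A) : eval φ x (reduce r p) = eval φ x p := by
  rw [reduce, eval_add, eval_mul, ← hr, mul_comm, eval_take_add_eval_drop]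

theorem eval_mulMod (p q : CoeffList A) :
    eval φ x (mulMod r p q) = eval φ x p * eval φ x q := by
  induction p with
  | nil => simp [mulMod]
  | cons c p ih =>
    simp only [mulMod, List.foldr_cons, eval_reduce hr, eval_add, eval_smul, eval_cons,
      map_zero] at ih ⊢
    rw [ih]
    ring

theorem eval_foldr_mulMod (l : List (CoeffList A)) (p : CoeffList A) :
    eval φ x (l.foldr (mulMod r) p) = (l.map (eval φ x)).prod * eval φ x p := by
  induction l with
  | nil => simp
  | cons q l ih =>
    rw [List.foldr_cons, eval_mulMod hr, ih, List.map_cons, List.prod_cons, mul_assoc]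

theorem eval_sqMod (p : CoeffList A) : eval φ x (sqMod r p) = eval φ x p ^ 2 := by
  rw [sqMod, eval_mulMod hr, sq]

theorem eval_iterate_sqMod (n : ℕ) (p : CoeffList A) :
    eval φ x ((sqMod r)^[n] p) = eval φ x p ^ 2 ^ n := by
  induction n generalizing p with
  | zero => simp
  | succ n ih => rw [Function.iterate_succ_apply, ih, eval_sqMod hr, ← pow_mul, ← pow_succ']

end Eval

end CoeffList

theorem irreducible_of_isUnit_root_pow_card_pow_sub_root {K : Type*} [Field K] [Finite K]
    {P : K[X]} (hP : 0 < P.natDegree)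
    (h : ∀ d, 0 < d → d ≤ P.natDegree / 2 →
      IsUnit (AdjoinRoot.root P ^ Nat.card K ^ d - AdjoinRoot.root P)) :
    Irreducible P := by
  rw [irreducible_iff_lt_natDegree_lt (ne_zero_of_natDegree_gt hP)
    (not_isUnit_of_natDegree_pos P hP)]
  intro g hg hg_deg hgP
  obtain ⟨hg_pos, hg_le⟩ := Finset.mem_Ioc.1 hg_deg
  obtain ⟨f, hf, hfg⟩ :=
    WfDvdMonoid.exists_irreducible_factor (not_isUnit_of_natDegree_pos g hg_pos) hg.ne_zero
  have := Fact.mk hf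
  have hf_le : f.natDegree ≤ P.natDegree / 2 := (natDegree_le_of_dvd hfg hg.ne_zero).trans hg_le
  have hunit : IsUnit (AdjoinRoot.root f ^ Nat.card K ^ f.natDegree - AdjoinRoot.root f) := by
    simpa using (h _ hf.natDegree_pos hf_le).map (AdjoinRoot.algHomOfDvd K P f (hfg.trans hgP))
  have hzero : AdjoinRoot.root f ^ Nat.card K ^ f.natDegree - AdjoinRoot.root f = 0 := by
    simpa using AdjoinRoot.mk_eq_zero.2
      (hf.natDegree_dvd_iff_dvd_X_pow_card_pow_sub_X.1 dvd_rfl)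
  exact hunit.ne_zero hzero

/-- The field `F₄ = F₂(ζ)` with `ζ ^ 2 = 1 + ζ`. -/
abbrev F₄ := QuadraticAlgebra (ZMod 2) 1 1

/-- The field `F₁₆ = F₄(α)` with `α ^ 2 = ζ + α`. Unlike Mathlib's `GaloisField 2 4` it is
computable. -/
abbrev F₁₆ := QuadraticAlgebra F₄ ⟨0, 1⟩ 1

namespace F₁₆

/-- The generator of `F₁₆` over `F₄`, a root of `X ^ 4 + X + 1`. -/
def α : F₁₆ := ⟨0, 1⟩

theorem exists_ringHom_apply_eq {R : Type*} [CommRing R] [CharP R 2] {a : R}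
    (ha : a ^ 4 + a + 1 = 0) : ∃ φ : F₁₆ →+* R, φ α = a := by
  have two_eq_zero : (2 : R) = 0 := CharTwo.two_eq_zero
  let _ : Algebra (ZMod 2) R := ZMod.algebra R 2
  have hζ : (a ^ 2 + a) * (a ^ 2 + a) = (1 : ZMod 2) • 1 + (1 : ZMod 2) • (a ^ 2 + a) := by
    rw [one_smul, one_smul]
    linear_combination ha + (a ^ 3 - a - 1) * two_eq_zero
  let _ : Algebra F₄ R := (QuadraticAlgebra.lift ⟨a ^ 2 + a, hζ⟩ : F₄ →ₐ[ZMod 2] R).toAlgebra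
  have hα : a * a = (⟨0, 1⟩ : F₄) • 1 + (1 : F₄) • a := by
    have smul_one_eq : (⟨0, 1⟩ : F₄) • (1 : R) = a ^ 2 + a := by
      simp [Algebra.smul_def, RingHom.algebraMap_toAlgebra]
    rw [smul_one_eq, one_smul]
    linear_combination -a * two_eq_zero
  exact ⟨(QuadraticAlgebra.lift ⟨a, hα⟩ : F₁₆ →ₐ[F₄] R), by simp [α]⟩

theorem two_eq_zero_of_ringHom {R : Type*} [Semiring R] (φ : F₁₆ →+* R) : (2 : R) = 0 := by
  rw [← map_ofNat φ 2, show (2 : F₁₆) = 0 from rfl, map_zero]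

end F₁₆

/-- The polynomial `Q` defining the place, as a function of the root `a` of `X ^ 4 + X + 1`. -/
noncomputable def placePoly {R : Type*} [Semiring R] (a : R) : R[X] :=
  X ^ 13 + C (a ^ 6) * X ^ 12 + C (a ^ 5) * X ^ 11 + C (a ^ 11) * X ^ 10
    + X ^ 9 + C (a ^ 12) * X ^ 8 + C (a ^ 7) * X ^ 7 + C (a ^ 7) * X ^ 5
    + C (a ^ 2) * X ^ 4 + C (a ^ 11) * X ^ 3 + C (a ^ 8) * X ^ 2 + C (a ^ 6) * X
    + C (a ^ 14)

namespace placePoly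

section ResidueRing

open CoeffList F₁₆

/-- `X ^ 13` modulo `placePoly α`, that is, the lower coefficients of `placePoly α`: signs do not
matter in characteristic 2. -/
def lowerCoeffs : CoeffList F₁₆ :=
  [α ^ 14, α ^ 6, α ^ 8, α ^ 11, α ^ 2, α ^ 7, 0, α ^ 7, α ^ 12, 1, α ^ 11, α ^ 5, α ^ 6]

/-- `X ^ 16 ^ d - X` modulo `placePoly α`, by `4 * d` squarings. -/
def frobeniusSubX (d : ℕ) : CoeffList F₁₆ := add ((sqMod lowerCoeffs)^[4 * d] [0, 1]) [0, 1]

/-- The inverse modulo `placePoly α` of the product of `X ^ 16 ^ d - X` over `1 ≤ d ≤ 6`. -/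
def frobeniusSubXInv : CoeffList F₁₆ :=
  [1, α ^ 3, α ^ 14, α ^ 8, α ^ 9, α ^ 5, 1, α ^ 11, α ^ 9, α ^ 11, α ^ 10, α ^ 6, α ^ 9]

/-- A solution of `y ^ 2 + y = X ^ 5` modulo `placePoly α`. -/
def artinSchreierRoot : CoeffList F₁₆ :=
  [α ^ 6, α ^ 8, α ^ 2, 0, α ^ 5, α ^ 9, α ^ 8, α, α ^ 8, α ^ 13, α, α ^ 13, α ^ 6]

theorem foldr_mulMod_frobeniusSubX :
    ((List.range' 1 6).map frobeniusSubX).foldr (mulMod lowerCoeffs) frobeniusSubXInv =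
      1 :: List.replicate 12 0 := by
  decide +kernel

theorem add_sqMod_artinSchreierRoot :
    add (sqMod lowerCoeffs artinSchreierRoot) artinSchreierRoot =
      [0, 0, 0, 0, 0, 1, 0, 0, 0, 0, 0, 0, 0] := by
  decide +kernel

variable {R : Type*} [CommRing R] {φ : F₁₆ →+* R} {x : R} (hx : (placePoly (φ α)).eval x = 0)
include hx

theorem pow_length_lowerCoeffs : x ^ lowerCoeffs.length = CoeffList.eval φ x lowerCoeffs := by
  simp only [placePoly, Polynomial.eval_add, Polynomial.eval_mul, eval_pow, eval_X, eval_C] at hx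
  simp only [lowerCoeffs, List.length_cons, List.length_nil, eval_cons, eval_nil, map_pow, map_one,
    map_zero]
  linear_combination x ^ 13 * two_eq_zero_of_ringHom φ - hx

theorem eval_frobeniusSubX (d : ℕ) :
    CoeffList.eval φ x (frobeniusSubX d) = x ^ 16 ^ d - x := by
  have hX : CoeffList.eval φ x [0, 1] = x := by simp
  rw [frobeniusSubX, CoeffList.eval_add, eval_iterate_sqMod (pow_length_lowerCoeffs hx), hX,
    pow_mul, show 2 ^ 4 = 16 from rfl]
  linear_combination x * two_eq_zero_of_ringHom φ

theorem isUnit_pow_sub_self {d : ℕ} (hd : 0 < d) (hd' : d ≤ 6) : IsUnit (x ^ 16 ^ d - x) := by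
  have hprod := congrArg (CoeffList.eval φ x) foldr_mulMod_frobeniusSubX
  rw [eval_foldr_mulMod (pow_length_lowerCoeffs hx)] at hprod
  have hunit := List.prod_isUnit_iff.1 (IsUnit.of_mul_eq_one _ (hprod.trans (by simp)))
  rw [← eval_frobeniusSubX hx]
  exact hunit _ (List.mem_map_of_mem (List.mem_map_of_mem (List.mem_range'_1.2 (by lia))))

theorem exists_sq_add_self_eq_pow_five : ∃ y : R, y ^ 2 + y = x ^ 5 := by
  refine ⟨CoeffList.eval φ x artinSchreierRoot, ?_⟩
  rw [← eval_sqMod (pow_length_lowerCoeffs hx), ← CoeffList.eval_add, add_sqMod_artinSchreierRoot]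
  simp [pow_succ']

end ResidueRing

theorem natDegree_eq {R : Type*} [Semiring R] [Nontrivial R] (a : R) :
    (placePoly a).natDegree = 13 := by
  rw [placePoly]
  compute_degree!

theorem map_eq {R S : Type*} [Semiring R] [Semiring S] (f : R →+* S) (a : R) :
    (placePoly a).map f = placePoly (f a) := by
  simp [placePoly]

theorem irreducible {K : Type*} [Field K] [Finite K] (hK : Nat.card K = 16) (φ : F₁₆ →+* K) :
    Irreducible (placePoly (φ F₁₆.α)) := by
  refine irreducible_of_isUnit_root_pow_card_pow_sub_root (by simp [natDegree_eq]) ?_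
  intro d hd hd'
  rw [natDegree_eq] at hd'
  rw [hK]
  refine isUnit_pow_sub_self (φ := (AdjoinRoot.of _).comp φ) ?_ hd (by lia)
  rw [RingHom.comp_apply, ← map_eq (AdjoinRoot.of _) (φ F₁₆.α), eval_map, AdjoinRoot.eval₂_root]

end placePoly

theorem splitting_place_F16_13_general
    (K : Type*) [Field K] [Fintype K] (hK : Fintype.card K = 16)
    (a : K) (ha : a ^ 4 + a + 1 = 0) :
    Irreducible (placePoly a) ∧
      ∀ (L : Type*) [CommRing L] [Algebra K L] (b : L),
        aeval b (placePoly a) = 0 → ∃ y : L, y ^ 2 + y = b ^ 5 := by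
  have : CharP K 2 := charP_of_card_eq_prime_pow (f := 4) hK
  obtain ⟨φ, rfl⟩ := F₁₆.exists_ringHom_apply_eq ha
  refine ⟨placePoly.irreducible (Nat.card_eq_fintype_card.trans hK) φ, fun L _ _ b hb ↦ ?_⟩
  refine placePoly.exists_sq_add_self_eq_pow_five (φ := (algebraMap K L).comp φ) ?_
  rwa [RingHom.comp_apply, ← placePoly.map_eq, eval_map_algebraMap]

/-- Section 5.1.1 of the paper: with `F₁₆ = F₂(a)` (`K` a field with 16 elements and
`a` a root of the irreducible polynomial `X⁴ + X + 1` over `F₂`), the polynomial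
`Q(X) = X¹³ + a⁶X¹² + a⁵X¹¹ + a¹¹X¹⁰ + X⁹ + a¹²X⁸ + a⁷X⁷ + a⁷X⁵ + a²X⁴ + a¹¹X³ + a⁸X²
+ a⁶X + a¹⁴` is irreducible over `F₁₆`, and for every root `b` of `Q` in the degree-13
extension `F_{16^13}` of `F₁₆` the Artin–Schreier equation `y² + y = b⁵` is solvable
there (equivalently, the absolute trace of `b⁵` vanishes), so the place `(Q(x))` splits
totally in the function field of `y² + y = x⁵`. -/
theorem splitting_place_F16_13
    (K : Type*) [Field K] [Fintype K] (hK : Fintype.card K = 16)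
    (a : K) (ha : a ^ 4 + a + 1 = 0) :
    Irreducible (X ^ 13 + C (a ^ 6) * X ^ 12 + C (a ^ 5) * X ^ 11 + C (a ^ 11) * X ^ 10
        + X ^ 9 + C (a ^ 12) * X ^ 8 + C (a ^ 7) * X ^ 7 + C (a ^ 7) * X ^ 5
        + C (a ^ 2) * X ^ 4 + C (a ^ 11) * X ^ 3 + C (a ^ 8) * X ^ 2 + C (a ^ 6) * X
        + C (a ^ 14) : K[X]) ∧
      ∀ (L : Type*) [Field L] [Algebra K L], Module.finrank K L = 13 →
        ∀ b : L,
          Polynomial.aeval b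
              (X ^ 13 + C (a ^ 6) * X ^ 12 + C (a ^ 5) * X ^ 11 + C (a ^ 11) * X ^ 10
                + X ^ 9 + C (a ^ 12) * X ^ 8 + C (a ^ 7) * X ^ 7 + C (a ^ 7) * X ^ 5
                + C (a ^ 2) * X ^ 4 + C (a ^ 11) * X ^ 3 + C (a ^ 8) * X ^ 2
                + C (a ^ 6) * X + C (a ^ 14) : K[X]) = 0 →
            ∃ y : L, y ^ 2 + y = b ^ 5 := by
  have h := splitting_place_F16_13_general K hK a ha
  exact ⟨h.1, fun L _ _ _ b ↦ h.2 L b⟩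
end
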